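/- Let φ(λ) = bλ + ∫_{(0,∞)} (1 − e^{−λs}) ν(ds) be the Laplace exponent of a subordinator whose Lévy measure ν(dx) has an almost monotone density ν(x). Suppose −φ'' ∈ WUSC(γ, C, x₀) for some C ≥ 1, x₀ ≥ 0 and γ < 0. Then there exist a ∈ (0,1] and c ∈ (0,1] such that for all 0 < x < a/x₀ (all x > 0 if x₀ = 0): ν(x) ≥ c·x^{−3}·(−φ''(1/x)). -/

import Mathlib

/-!
Write `-φ'' (l) = g (l) = ∫ s² exp (-l s) ν(ds)` and fix `x > 0`. Cutting the integral at `s = x`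
gives `g (l) ≤ e g (1 / x) + C₀ l⁻³ ν(x)`: below the cut `exp (-l s) ≤ 1 ≤ e exp (-s / x)`, and
above it the density is at most a multiple of `ν(x)`. For `l = 1 / (L x)` the scaling hypothesis
bounds `g (1 / x) = g (L l)` by `C L ^ γ g (l)`; since `γ < 0`, a large `L` makes
`e g (1 / x) ≤ g (l) / 2`, so the first term is absorbed and the second one dominates `g (1 / x)`.
The argument does not depend on the power of `s`.
-/

open MeasureTheory Real Set

noncomputable section

/-- Weak upper scaling property at infinity. -/
def WUSC (f : ℝ → ℝ) (θ C x₀ : ℝ) : Prop :=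
  ∀ lam : ℝ, 1 ≤ lam → ∀ x : ℝ, x₀ < x → f (lam * x) ≤ C * lam ^ θ * f x

/-- The `n`-th moment of the Lévy measure `ν` with exponential weight, `∫_{(0,∞)} sⁿ e^{-ls} ν(ds)`.
Up to sign it is the `n`-th derivative of the Laplace exponent when `n ≥ 2`. The integral is
restricted to `(0,∞)` because `ν` is encoded as a measure on the whole line. -/
def laplaceMoment (n : ℕ) (ν : Measure ℝ) (l : ℝ) : ℝ :=
  ∫ s in Ioi (0 : ℝ), s ^ n * exp (-l * s) ∂ν

/-- The property that the paper calls an almost monotone density: on `(0,∞)` the function is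
decreasing up to a multiplicative constant. -/
def AlmostAntitone (f : ℝ → ℝ) : Prop :=
  ∃ K : ℝ, 1 ≤ K ∧ ∀ x y : ℝ, 0 < x → x ≤ y → f y ≤ K * f x

section Elementary

variable {k l s : ℝ}

lemma exp_neg_mul_le_one (hk : 0 ≤ k) (hs : 0 ≤ s) : exp (-k * s) ≤ 1 :=
  exp_le_one_iff.2 (by rw [neg_mul]; exact neg_nonpos.2 (mul_nonneg hk hs))

lemma pow_mul_exp_neg_mul_le (n : ℕ) (hk : 0 < k) (hs : 0 ≤ s) :
    s ^ n * exp (-k * s) ≤ n.factorial / k ^ n := by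
  have h := pow_div_factorial_le_exp (k * s) (mul_nonneg hk.le hs) n
  rw [div_le_iff₀ (by positivity), mul_pow] at h
  rw [neg_mul, exp_neg, ← div_eq_mul_inv, div_le_div_iff₀ (exp_pos _) (by positivity)]
  linarith

lemma pow_succ_mul_exp_neg_mul_le_min (n : ℕ) (hk : 0 < k) (hs : 0 ≤ s) :
    s ^ (n + 1) * exp (-k * s) ≤
      max ((n + 1).factorial / k ^ (n + 1)) (n.factorial / k ^ n) * min 1 s := by
  rcases le_total 1 s with h | h
  · rw [min_eq_left h, mul_one]
    exact (pow_mul_exp_neg_mul_le (n + 1) hk hs).trans (le_max_left _ _)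
  · rw [min_eq_right h, pow_succ, mul_right_comm]
    gcongr
    exact (pow_mul_exp_neg_mul_le n hk hs).trans (le_max_right _ _)

lemma one_sub_exp_neg_mul_le_min (hs : 0 ≤ s) :
    1 - exp (-k * s) ≤ max 1 k * min 1 s := by
  rcases le_total 1 s with h | h
  · rw [min_eq_left h, mul_one]
    exact (sub_le_self _ (exp_pos _).le).trans (le_max_left _ _)
  · rw [min_eq_right h]
    have := mul_le_mul_of_nonneg_right (le_max_right 1 k) hs
    linarith [add_one_le_exp (-k * s)]

lemma integral_pow_mul_exp_neg_mul_Ioi (n : ℕ) (hl : 0 < l) :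
    ∫ s in Ioi (0 : ℝ), s ^ n * exp (-l * s) = n.factorial / l ^ (n + 1) := by
  have h := integral_rpow_mul_exp_neg_mul_Ioi (a := n + 1) (by positivity) hl
  rw [Gamma_nat_eq_factorial, ← Nat.cast_succ, rpow_natCast, Nat.cast_succ, one_div_pow,
    one_div_mul_eq_div] at h
  simpa only [add_sub_cancel_right, rpow_natCast, ← neg_mul] using h

lemma exists_one_le_mul_rpow_le {γ ε : ℝ} (hγ : γ < 0) (C : ℝ) (hε : 0 < ε) :
    ∃ L : ℝ, 1 ≤ L ∧ C * L ^ γ ≤ ε := by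
  have hlim : Filter.Tendsto (fun L : ℝ => C * L ^ γ) Filter.atTop (nhds 0) := by
    simpa only [neg_neg, mul_zero] using (tendsto_rpow_neg_atTop (neg_pos.2 hγ)).const_mul C
  exact ((Filter.eventually_ge_atTop 1).and (hlim.eventually (ge_mem_nhds hε))).exists

end Elementary

section LaplaceExponent

variable {n : ℕ} {ν : Measure ℝ} {l : ℝ}

lemma laplaceMoment_nonneg : 0 ≤ laplaceMoment n ν l :=
  setIntegral_nonneg measurableSet_Ioi fun s (hs : 0 < s) => by positivity

lemma integrableOn_min_one_of_lintegral_ne_top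
    (hν : ∫⁻ s in Ioi (0 : ℝ), ENNReal.ofReal (min 1 s) ∂ν ≠ ⊤) :
    IntegrableOn (fun s : ℝ => min 1 s) (Ioi 0) ν := by
  refine (lintegral_ofReal_ne_top_iff_integrable (by fun_prop) ?_).1 hν
  filter_upwards [ae_restrict_mem measurableSet_Ioi] with s hs
  exact le_min zero_le_one (le_of_lt hs)

lemma integrableOn_pow_succ_mul_exp_neg_mul
    (hν : IntegrableOn (fun s : ℝ => min 1 s) (Ioi 0) ν) (n : ℕ) (hl : 0 < l) :
    IntegrableOn (fun s : ℝ => s ^ (n + 1) * exp (-l * s)) (Ioi 0) ν := by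
  refine Integrable.mono' (hν.const_mul (max ((n + 1).factorial / l ^ (n + 1))
    (n.factorial / l ^ n))) (by fun_prop) ?_
  filter_upwards [ae_restrict_mem measurableSet_Ioi] with s (hs : 0 < s)
  rw [norm_of_nonneg (by positivity)]
  exact pow_succ_mul_exp_neg_mul_le_min n hl hs.le

lemma integrableOn_one_sub_exp_neg_mul
    (hν : IntegrableOn (fun s : ℝ => min 1 s) (Ioi 0) ν) (hl : 0 ≤ l) :
    IntegrableOn (fun s : ℝ => 1 - exp (-l * s)) (Ioi 0) ν := by
  refine Integrable.mono' (hν.const_mul (max 1 l)) (by fun_prop) ?_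
  filter_upwards [ae_restrict_mem measurableSet_Ioi] with s (hs : 0 < s)
  rw [norm_of_nonneg (sub_nonneg.2 (exp_neg_mul_le_one hl hs.le))]
  exact one_sub_exp_neg_mul_le_min hs.le

-- The constant `κ` is `1` for `φ` itself, where `exp (-l * s)` alone need not be integrable,
-- and `0` for the higher moments.
lemma hasDerivAt_setIntegral_const_sub_pow_mul_exp (κ : ℝ) (hl : 0 < l)
    (hint : IntegrableOn (fun s => κ - s ^ n * exp (-l * s)) (Ioi 0) ν)
    (hint_succ : ∀ k, 0 < k → IntegrableOn (fun s => s ^ (n + 1) * exp (-k * s)) (Ioi 0) ν) :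
    HasDerivAt (fun k => ∫ s in Ioi (0 : ℝ), (κ - s ^ n * exp (-k * s)) ∂ν)
      (laplaceMoment (n + 1) ν l) l := by
  refine (hasDerivAt_integral_of_dominated_loc_of_deriv_le
    (F := fun k s => κ - s ^ n * exp (-k * s)) (F' := fun k s => s ^ (n + 1) * exp (-k * s))
    (Ioi_mem_nhds (half_lt_self hl)) (.of_forall fun k => by fun_prop) hint (by fun_prop)
    ?dominated (hint_succ (l / 2) (half_pos hl)) ?deriv).2
  case dominated =>
    filter_upwards [ae_restrict_mem measurableSet_Ioi] with s (hs : 0 < s) k (hk : l / 2 < k)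
    rw [norm_of_nonneg (by positivity)]
    gcongr
  case deriv =>
    refine .of_forall fun s k _ => ?_
    have hlin : HasDerivAt (fun k : ℝ => -k * s) (-1 * s) k :=
      (hasDerivAt_id k).neg.mul_const s
    exact ((hlin.exp.const_mul (s ^ n)).const_sub κ).congr_deriv (by ring)

variable {φ : ℝ → ℝ} {b : ℝ}

lemma hasDerivAt_laplaceExponent (hν : IntegrableOn (fun s : ℝ => min 1 s) (Ioi 0) ν)
    (hφ : ∀ k, 0 < k → φ k = b * k + ∫ s in Ioi (0 : ℝ), (1 - exp (-k * s)) ∂ν) (hl : 0 < l) :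
    HasDerivAt φ (b + laplaceMoment 1 ν l) l := by
  have hjump : HasDerivAt (fun k => ∫ s in Ioi (0 : ℝ), (1 - exp (-k * s)) ∂ν)
      (laplaceMoment 1 ν l) l := by
    simpa only [pow_zero, one_mul] using
      hasDerivAt_setIntegral_const_sub_pow_mul_exp (n := 0) 1 hl
        (by simpa only [pow_zero, one_mul] using integrableOn_one_sub_exp_neg_mul hν hl.le)
        fun _ => integrableOn_pow_succ_mul_exp_neg_mul hν 0
  refine ((hasDerivAt_const_mul b).add hjump).congr_of_eventuallyEq ?_
  filter_upwards [Ioi_mem_nhds hl] with k hk using hφ k hk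

lemma hasDerivAt_laplaceMoment_succ (hν : IntegrableOn (fun s : ℝ => min 1 s) (Ioi 0) ν)
    (n : ℕ) (hl : 0 < l) :
    HasDerivAt (laplaceMoment (n + 1) ν) (-laplaceMoment (n + 2) ν l) l := by
  have h := hasDerivAt_setIntegral_const_sub_pow_mul_exp (n := n + 1) 0 hl
    (by simpa only [zero_sub] using! (integrableOn_pow_succ_mul_exp_neg_mul hν n hl).neg)
    fun _ => integrableOn_pow_succ_mul_exp_neg_mul hν (n + 1)
  simpa only [zero_sub, integral_neg, neg_neg] using! h.fun_neg

lemma neg_deriv_deriv_laplaceExponent (hν : IntegrableOn (fun s : ℝ => min 1 s) (Ioi 0) ν)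
    (hφ : ∀ k, 0 < k → φ k = b * k + ∫ s in Ioi (0 : ℝ), (1 - exp (-k * s)) ∂ν) (hl : 0 < l) :
    -(deriv (deriv φ) l) = laplaceMoment 2 ν l := by
  have hderiv : deriv φ =ᶠ[nhds l] fun k => b + laplaceMoment 1 ν k := by
    filter_upwards [Ioi_mem_nhds hl] with k hk using (hasDerivAt_laplaceExponent hν hφ hk).deriv
  rw [hderiv.deriv_eq, ((hasDerivAt_laplaceMoment_succ hν 0 hl).const_add b).deriv, neg_neg]

end LaplaceExponent

section Cutoff

variable {n : ℕ} {ν : Measure ℝ} {l y : ℝ}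

lemma setIntegral_Ioc_pow_mul_exp_le
    (hint : ∀ k, 0 < k → IntegrableOn (fun s => s ^ n * exp (-k * s)) (Ioi 0) ν)
    (hy : 0 < y) (hl : 0 < l) :
    ∫ s in Ioc 0 y, s ^ n * exp (-l * s) ∂ν ≤ exp 1 * laplaceMoment n ν (1 / y) := by
  have hint_y : IntegrableOn (fun s => exp 1 * (s ^ n * exp (-(1 / y) * s))) (Ioi 0) ν :=
    (hint (1 / y) (one_div_pos.2 hy)).const_mul (exp 1)
  calc ∫ s in Ioc 0 y, s ^ n * exp (-l * s) ∂ν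
      ≤ ∫ s in Ioc 0 y, exp 1 * (s ^ n * exp (-(1 / y) * s)) ∂ν := by
        refine setIntegral_mono_on ((hint l hl).mono_set Ioc_subset_Ioi_self)
          (hint_y.mono_set Ioc_subset_Ioi_self) measurableSet_Ioc fun s hs => ?_
        have hs_nonneg : 0 ≤ s := hs.1.le
        have hweight : 1 ≤ exp 1 * exp (-(1 / y) * s) := by
          rw [← exp_add, one_le_exp_iff, neg_mul, one_div_mul_eq_div, ← sub_eq_add_neg]
          exact sub_nonneg.2 (div_le_one_of_le₀ hs.2 hy.le)
        rw [mul_left_comm]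
        gcongr
        exact (exp_neg_mul_le_one hl.le hs_nonneg).trans hweight
    _ ≤ ∫ s in Ioi 0, exp 1 * (s ^ n * exp (-(1 / y) * s)) ∂ν := by
        refine setIntegral_mono_set hint_y ?_ Ioc_subset_Ioi_self.eventuallyLE
        filter_upwards [ae_restrict_mem measurableSet_Ioi] with s (hs : 0 < s)
        simp only [Pi.zero_apply]
        positivity
    _ = exp 1 * laplaceMoment n ν (1 / y) := integral_const_mul _ _

lemma restrict_withDensity_le_smul {α : Type*} [MeasurableSpace α] {μ : Measure α}
    {f : α → ENNReal} {A : ENNReal} {t : Set α} (ht : MeasurableSet t) (hf : ∀ x ∈ t, f x ≤ A) :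
    (μ.withDensity f).restrict t ≤ A • μ := by
  calc (μ.withDensity f).restrict t
      = (μ.restrict t).withDensity f := restrict_withDensity ht f
    _ ≤ (μ.restrict t).withDensity fun _ => A :=
        withDensity_mono ((ae_restrict_mem ht).mono hf)
    _ = A • μ.restrict t := withDensity_const A
    _ ≤ A • μ := by gcongr; exact Measure.restrict_le_self

lemma setIntegral_Ioi_pow_mul_exp_le {A : ℝ} (hA : 0 ≤ A)
    (hν : ν.restrict (Ioi y) ≤ ENNReal.ofReal A • volume.restrict (Ioi 0)) (hl : 0 < l) :
    ∫ s in Ioi y, s ^ n * exp (-l * s) ∂ν ≤ A * (n.factorial / l ^ (n + 1)) := by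
  have hgamma := integral_pow_mul_exp_neg_mul_Ioi n hl
  have hint : IntegrableOn (fun s : ℝ => s ^ n * exp (-l * s)) (Ioi 0) :=
    Integrable.of_integral_ne_zero (by rw [hgamma]; positivity)
  calc ∫ s in Ioi y, s ^ n * exp (-l * s) ∂ν
      ≤ ∫ s, s ^ n * exp (-l * s) ∂(ENNReal.ofReal A • volume.restrict (Ioi 0)) := by
        refine integral_mono_measure hν ?_ (hint.smul_measure ENNReal.ofReal_ne_top)
        refine Measure.ae_smul_measure ?_ _
        filter_upwards [ae_restrict_mem measurableSet_Ioi] with s (hs : 0 < s)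
        simp only [Pi.zero_apply]
        positivity
    _ = A * (n.factorial / l ^ (n + 1)) := by
        rw [integral_smul_measure, hgamma, ENNReal.toReal_ofReal hA, smul_eq_mul]

lemma laplaceMoment_le_add {A : ℝ}
    (hint : ∀ k, 0 < k → IntegrableOn (fun s => s ^ n * exp (-k * s)) (Ioi 0) ν)
    (hA : 0 ≤ A) (hν : ν.restrict (Ioi y) ≤ ENNReal.ofReal A • volume.restrict (Ioi 0))
    (hy : 0 < y) (hl : 0 < l) :
    laplaceMoment n ν l ≤
      exp 1 * laplaceMoment n ν (1 / y) + A * (n.factorial / l ^ (n + 1)) := by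
  rw [laplaceMoment, ← Ioc_union_Ioi_eq_Ioi hy.le, setIntegral_union Ioc_disjoint_Ioi_same
    measurableSet_Ioi ((hint l hl).mono_set Ioc_subset_Ioi_self)
    ((hint l hl).mono_set (Ioi_subset_Ioi hy.le))]
  exact add_le_add (setIntegral_Ioc_pow_mul_exp_le hint hy hl)
    (setIntegral_Ioi_pow_mul_exp_le hA hν hl)

end Cutoff

section Scaling

variable {n : ℕ} {ν : Measure ℝ} {f : ℝ → ℝ} {γ C x₀ L x : ℝ}

lemma WUSC.apply_one_div_le (hf : WUSC f γ C x₀) (hL : 1 ≤ L) (hx : 0 < x)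
    (hxx₀ : x * x₀ < 1 / L) : f (1 / x) ≤ C * L ^ γ * f (1 / (L * x)) := by
  have hL_pos : 0 < L := one_pos.trans_le hL
  have hx₀_lt : x₀ < 1 / (L * x) := by
    rw [lt_div_iff₀ (by positivity)]
    rw [lt_div_iff₀ hL_pos] at hxx₀
    linarith
  have hmul : L * (1 / (L * x)) = 1 / x := by field_simp
  simpa only [hmul] using hf L hL _ hx₀_lt

lemma laplaceMoment_one_div_le {A : ℝ}
    (hint : ∀ k, 0 < k → IntegrableOn (fun s => s ^ n * exp (-k * s)) (Ioi 0) ν)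
    (hA : 0 ≤ A) (hν : ν.restrict (Ioi x) ≤ ENNReal.ofReal A • volume.restrict (Ioi 0))
    (hx : 0 < x) (hL : 0 < L)
    (hscal : exp 1 * laplaceMoment n ν (1 / x) ≤ 1 / 2 * laplaceMoment n ν (1 / (L * x))) :
    laplaceMoment n ν (1 / x) ≤ A * (n.factorial * (L * x) ^ (n + 1)) := by
  have hcut := laplaceMoment_le_add hint hA hν hx (one_div_pos.2 (mul_pos hL hx))
  rw [one_div_pow, div_div_eq_mul_div, div_one] at hcut
  calc laplaceMoment n ν (1 / x)
      ≤ exp 1 * laplaceMoment n ν (1 / x) :=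
        le_mul_of_one_le_left laplaceMoment_nonneg (one_le_exp zero_le_one)
    _ ≤ A * (n.factorial * (L * x) ^ (n + 1)) := by linarith

end Scaling

theorem levy_density_lower_bound_general
    {n : ℕ} {ν : Measure ℝ} {νd f : ℝ → ℝ} {γ C x₀ : ℝ}
    (hint : ∀ l, 0 < l → IntegrableOn (fun s => s ^ n * exp (-l * s)) (Ioi 0) ν)
    (hf : ∀ l, 0 < l → f l = laplaceMoment n ν l)
    (hνd_nonneg : ∀ x, 0 < x → 0 ≤ νd x)
    (hνd : ν = (volume.restrict (Ioi 0)).withDensity fun x => ENNReal.ofReal (νd x))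
    (hνd_mono : AlmostAntitone νd) (hγ : γ < 0) (hscal : WUSC f γ C x₀) :
    ∃ a c : ℝ, 0 < a ∧ a ≤ 1 ∧ 0 < c ∧ c ≤ 1 ∧
      ∀ x : ℝ, 0 < x → x * x₀ < a → c * (x ^ (n + 1))⁻¹ * f (1 / x) ≤ νd x := by
  obtain ⟨K, hK, hmono⟩ := hνd_mono
  obtain ⟨L, hL, hLγ⟩ := exists_one_le_mul_rpow_le hγ (exp 1 * C) one_half_pos
  have hL_pos : 0 < L := one_pos.trans_le hL
  have hconst : 1 ≤ K * (n.factorial * L ^ (n + 1)) :=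
    one_le_mul_of_one_le_of_one_le hK <| one_le_mul_of_one_le_of_one_le
      (by exact_mod_cast n.factorial_pos) (one_le_pow₀ hL)
  refine ⟨1 / L, 1 / (K * (n.factorial * L ^ (n + 1))), by positivity,
    (div_le_one hL_pos).2 hL, by positivity, (div_le_one (by positivity)).2 hconst,
    fun x hx hxx₀ => ?_⟩
  have habsorb : exp 1 * laplaceMoment n ν (1 / x) ≤
      1 / 2 * laplaceMoment n ν (1 / (L * x)) := by
    have h := hscal.apply_one_div_le hL hx hxx₀
    rw [hf _ (by positivity), hf _ (by positivity)] at h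
    calc exp 1 * laplaceMoment n ν (1 / x)
        ≤ exp 1 * (C * L ^ γ * laplaceMoment n ν (1 / (L * x))) := by gcongr
      _ = exp 1 * C * L ^ γ * laplaceMoment n ν (1 / (L * x)) := by ring
      _ ≤ 1 / 2 * laplaceMoment n ν (1 / (L * x)) :=
          mul_le_mul_of_nonneg_right hLγ laplaceMoment_nonneg
  have htail : ν.restrict (Ioi x) ≤ ENNReal.ofReal (K * νd x) • volume.restrict (Ioi 0) :=
    hνd ▸ restrict_withDensity_le_smul measurableSet_Ioi fun s hs =>
      ENNReal.ofReal_le_ofReal (hmono x s hx (le_of_lt hs))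
  have hbound := laplaceMoment_one_div_le hint
    (mul_nonneg (by positivity) (hνd_nonneg x hx)) htail hx hL_pos habsorb
  rw [hf _ (by positivity), one_div, ← mul_inv, inv_mul_le_iff₀ (by positivity)]
  linear_combination hbound

/-- If the Lévy measure has an almost monotone density `νd` and
`−φ'' ∈ WUSC(γ, C, x₀)` with `γ < 0`, then there are `a, c ∈ (0,1]` such that
`νd(x) ≥ c x^{−3} (−φ''(1/x))` for all `0 < x < a/x₀` (all `x > 0` if `x₀ = 0`). -/
theorem levy_density_lower_bound
    (φ : ℝ → ℝ) (b : ℝ) (ν : Measure ℝ) (νd : ℝ → ℝ) (γ C x₀ : ℝ)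
    (hb : 0 ≤ b)
    (hνfin : ∫⁻ s in Ioi (0:ℝ), ENNReal.ofReal (min 1 s) ∂ν ≠ ⊤)
    (hφ : ∀ lam : ℝ, 0 ≤ lam →
      φ lam = b * lam + ∫ s in Ioi (0:ℝ), (1 - Real.exp (-lam * s)) ∂ν)
    (hνd_meas : Measurable νd)
    (hνd_nonneg : ∀ x : ℝ, 0 < x → 0 ≤ νd x)
    (hνd : ν = (volume.restrict (Ioi 0)).withDensity (fun x => ENNReal.ofReal (νd x)))
    (hνd_mono : ∃ Cm : ℝ, 1 ≤ Cm ∧ ∀ x y : ℝ, 0 < x → x ≤ y → νd y ≤ Cm * νd x)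
    (hγ : γ < 0) (hC : 1 ≤ C) (hx₀ : 0 ≤ x₀)
    (hscal : WUSC (fun x => -(deriv (deriv φ) x)) γ C x₀) :
    ∃ a c : ℝ, 0 < a ∧ a ≤ 1 ∧ 0 < c ∧ c ≤ 1 ∧
      ∀ x : ℝ, 0 < x → x * x₀ < a →
        c * (x ^ 3)⁻¹ * -(deriv (deriv φ) (1 / x)) ≤ νd x := by
  have hν := integrableOn_min_one_of_lintegral_ne_top hνfin
  exact levy_density_lower_bound_general
    (fun _ => integrableOn_pow_succ_mul_exp_neg_mul hν 1)
    (fun _ => neg_deriv_deriv_laplaceExponent hν fun k hk => hφ k hk.le)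
    hνd_nonneg hνd hνd_mono hγ hscal
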